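/- arXiv:2504.20739 — 5 statements merged into one kernel-verified Lean document; each statement's English description precedes it below -/
import Mathlib

section
/- Fix integers d ≥ 2 and ℓ ≥ 2, and let S = {−(d−1), …, −2, −1, 1, 2, …, d−1} ⊆ ℤ. The number of subsets X ⊆ S with |X| = ℓ−1 such that for every i ∈ {1, …, d−1}, if both −i ∈ X and i ∈ X then there exists j ∈ X with −i < j < i, equals 2·∑_{k=0}^{d−2} C(2k, ℓ−2), where C(·,·) denotes the binomial coefficient. -/
/-- Elements of absolute value between `d-k` and `d-1`. -/
noncomputable def cpT (d k : ℕ) : Finset ℤ :=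
  Finset.Icc ((d : ℤ) - k) (d - 1) ∪ Finset.Icc (-((d : ℤ) - 1)) (-((d : ℤ) - k))

lemma cpT_mem (d k : ℕ) (hk : k < d - 1) (x : ℤ) :
    x ∈ cpT d k ↔ (d : ℤ) - k ≤ |x| ∧ |x| ≤ d - 1 := by
  simp only [cpT, Finset.mem_union, Finset.mem_Icc]
  rcases abs_cases x with ⟨h, _⟩ | ⟨h, _⟩ <;> rw [h] <;> omega

lemma cpT_card (d k : ℕ) (hk : k < d - 1) : (cpT d k).card = 2 * k := by
  rw [cpT, Finset.card_union_of_disjoint, Int.card_Icc, Int.card_Icc]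
  · omega
  · rw [Finset.disjoint_left]
    intro x hx hy
    simp only [Finset.mem_Icc] at hx hy
    omega

/-- The element of minimal absolute value. -/
def cpS (d : ℕ) (p : ℕ × Bool) : ℤ :=
  if p.2 then (d : ℤ) - 1 - p.1 else -((d : ℤ) - 1 - p.1)

lemma cpS_abs (d : ℕ) (p : ℕ × Bool) (hk : p.1 < d - 1) :
    |cpS d p| = (d : ℤ) - 1 - p.1 := by
  unfold cpS
  split_ifs
  · rw [abs_of_nonneg]; omega
  · rw [abs_neg, abs_of_nonneg]; omega

lemma cpS_notMem (d : ℕ) (p : ℕ × Bool) (hk : p.1 < d - 1) : cpS d p ∉ cpT d p.1 := by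
  rw [cpT_mem d p.1 hk, cpS_abs d p hk]
  omega

/-- Sets with prescribed minimal element. -/
noncomputable def cpA (d n : ℕ) (p : ℕ × Bool) : Finset (Finset ℤ) :=
  (Finset.powersetCard n (cpT d p.1)).image (insert (cpS d p))

lemma cpA_card (d n : ℕ) (p : ℕ × Bool) (hk : p.1 < d - 1) :
    (cpA d n p).card = Nat.choose (2 * p.1) n := by
  rw [cpA, Finset.card_image_of_injOn, Finset.card_powersetCard, cpT_card d p.1 hk]
  intro X hX Y hY h
  simp only [Finset.mem_coe,
    Finset.mem_powersetCard] at hX hY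
  have h1 : cpS d p ∉ X := fun h => cpS_notMem d p hk (hX.1 h)
  have h2 : cpS d p ∉ Y := fun h => cpS_notMem d p hk (hY.1 h)
  have h' : insert (cpS d p) X = insert (cpS d p) Y := h
  rw [← Finset.erase_insert h1, ← Finset.erase_insert h2, h']

lemma cpA_mem (d n : ℕ) (p : ℕ × Bool) (hk : p.1 < d - 1) (X : Finset ℤ) :
    X ∈ cpA d n p ↔ cpS d p ∈ X ∧ X.card = n + 1 ∧
      ∀ x ∈ X, x ≠ cpS d p → (d : ℤ) - p.1 ≤ |x| ∧ |x| ≤ d - 1 := by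
  simp only [cpA, Finset.mem_image, Finset.mem_powersetCard]
  constructor
  · rintro ⟨Y, ⟨hY, hc⟩, rfl⟩
    refine ⟨Finset.mem_insert_self _ _, ?_, ?_⟩
    · rw [Finset.card_insert_of_notMem (fun h => cpS_notMem d p hk (hY h)), hc]
    · intro x hx hne
      exact (cpT_mem d p.1 hk x).1 (hY ((Finset.mem_insert.1 hx).resolve_left hne))
  · rintro ⟨h1, h2, h3⟩
    refine ⟨X.erase (cpS d p), ⟨?_, ?_⟩, Finset.insert_erase h1⟩
    · intro x hx
      rw [Finset.mem_erase] at hx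
      exact (cpT_mem d p.1 hk x).2 (h3 x hx.2 hx.1)
    · rw [Finset.card_erase_of_mem h1, h2]; rfl

lemma cpS_inj (d : ℕ) (p q : ℕ × Bool) (hp : p.1 < d - 1) (hq : q.1 < d - 1)
    (h : cpS d p = cpS d q) : p = q := by
  obtain ⟨a, b⟩ := p
  obtain ⟨a', b'⟩ := q
  cases b <;> cases b' <;> simp [cpS] at h hp hq ⊢ <;> omega

/-- The number of subsets `X` of `S = {-(d-1), …, -1, 1, …, d-1} ⊆ ℤ` with
`|X| = ℓ - 1` such that whenever both `-i` and `i` belong to `X` (for `1 ≤ i ≤ d-1`)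
there exists `j ∈ X` with `-i < j < i`, equals `2 · ∑_{k=0}^{d-2} C(2k, ℓ-2)`. -/
theorem crossPolytope_monotone_path_count (d ℓ : ℕ) (hd : 2 ≤ d) (hℓ : 2 ≤ ℓ) :
    Set.ncard {X : Finset ℤ |
      (∀ i ∈ X, i ≠ 0 ∧ |i| ≤ (d : ℤ) - 1) ∧
      X.card = ℓ - 1 ∧
      (∀ i : ℤ, 1 ≤ i → i ≤ (d : ℤ) - 1 → -i ∈ X → i ∈ X →
        ∃ j ∈ X, -i < j ∧ j < i)} =
      2 * ∑ k ∈ Finset.range (d - 1), Nat.choose (2 * k) (ℓ - 2) := by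
  have key : {X : Finset ℤ |
      (∀ i ∈ X, i ≠ 0 ∧ |i| ≤ (d : ℤ) - 1) ∧
      X.card = ℓ - 1 ∧
      (∀ i : ℤ, 1 ≤ i → i ≤ (d : ℤ) - 1 → -i ∈ X → i ∈ X →
        ∃ j ∈ X, -i < j ∧ j < i)} =
      (((Finset.range (d - 1) ×ˢ (Finset.univ : Finset Bool)).biUnion (cpA d (ℓ - 2)) :
        Finset (Finset ℤ)) : Set (Finset ℤ)) := by
    ext X
    simp only [Set.mem_ofPred_eq, Finset.mem_coe, Finset.mem_biUnion, Finset.mem_product,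
      Finset.mem_range, Finset.mem_univ, and_true]
    constructor
    · rintro ⟨h1, h2, h3⟩
      have hne : X.Nonempty := by
        rw [← Finset.card_pos]; omega
      obtain ⟨s, hs, hmin⟩ := Finset.exists_min_image X (fun x => |x|) hne
      obtain ⟨hs0, hsd⟩ := h1 s hs
      have hpos : 0 < |s| := abs_pos.2 hs0
      have hna : |s| = (s.natAbs : ℤ) := Int.abs_eq_natAbs s
      have hk : ((d - 1 - s.natAbs : ℕ), decide (0 < s)).1 < d - 1 := by
        simp only; omega
      have hS : cpS d ((d - 1 - s.natAbs : ℕ), decide (0 < s)) = s := by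
        simp only [cpS, decide_eq_true_eq]
        split_ifs <;> omega
      refine ⟨((d - 1 - s.natAbs : ℕ), decide (0 < s)), hk, ?_⟩
      rw [cpA_mem d _ _ hk, hS]
      refine ⟨hs, by omega, ?_⟩
      intro x hx hxs
      refine ⟨?_, (h1 x hx).2⟩
      have hle : |s| ≤ |x| := hmin x hx
      have hne' : |s| ≠ |x| := by
        intro he
        have hxe : x = -s := by
          rcases abs_eq_abs.1 he with h | h
          · exact absurd h.symm hxs
          · omega
        have : ∃ j ∈ X, -|s| < j ∧ j < |s| := by
          apply h3 _ (by omega) hsd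
          · rcases abs_cases s with ⟨h, _⟩ | ⟨h, _⟩ <;> rw [h]
            · rwa [← hxe]
            · rwa [neg_neg]
          · rcases abs_cases s with ⟨h, _⟩ | ⟨h, _⟩ <;> rw [h]
            · exact hs
            · rwa [← hxe]
        obtain ⟨j, hj, hj1, hj2⟩ := this
        have := abs_lt.2 ⟨hj1, hj2⟩
        have : |s| ≤ |j| := hmin j hj
        omega
      simp only
      omega
    · rintro ⟨p, hk, hX⟩
      rw [cpA_mem d _ _ hk] at hX
      obtain ⟨h1, h2, h3⟩ := hX
      have ha := cpS_abs d p hk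
      refine ⟨?_, by omega, ?_⟩
      · intro i hi
        by_cases he : i = cpS d p
        · subst he
          refine ⟨?_, by omega⟩
          intro h0
          rw [h0] at ha
          simp at ha
          omega
        · have := h3 i hi he
          refine ⟨?_, this.2⟩
          rintro rfl
          simp at this
          omega
      · intro i hi1 hi2 hm hp
        refine ⟨cpS d p, h1, ?_⟩
        rw [← abs_lt, ha]
        by_cases he : i = cpS d p
        · have := h3 _ hm (by omega)
          rw [abs_neg, abs_of_pos (by omega)] at this
          omega
        · have := h3 _ hp he
          rw [abs_of_pos (by omega)] at this
          omega
  rw [key, Set.ncard_coe_finset, Finset.card_biUnion]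
  · rw [Finset.sum_congr rfl (g := fun p : ℕ × Bool => Nat.choose (2 * p.1) (ℓ - 2)),
      Finset.sum_product]
    · simp [Finset.mul_sum]
    · intro p hp
      exact cpA_card d _ p (by simpa using hp)
  · intro p hp q hq hpq
    have hp' : p.1 < d - 1 := by simpa using hp
    have hq' : q.1 < d - 1 := by simpa using hq
    refine Finset.disjoint_left.2 ?_
    intro X hX hY
    rw [cpA_mem d _ _ hp'] at hX
    rw [cpA_mem d _ _ hq'] at hY
    have hne : cpS d p ≠ cpS d q := fun h => hpq (cpS_inj d p q hp' hq' h)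
    have a := hX.2.2 _ hY.1 hne.symm
    have b := hY.2.2 _ hX.1 hne
    rw [cpS_abs d _ hq'] at a
    rw [cpS_abs d _ hp'] at b
    omega
end

section
/- Fix integers d ≥ 4 and n ≥ d+1, and for 2 ≤ ℓ ≤ n−2 define N(ℓ) = ∑_{δ ≥ 1, 2δ ≤ d−1} 2·C(ℓ−2, δ−1)·C(n−ℓ−2, δ−1) + ∑_{δ ≥ 1, 2δ+1 ≤ d−1} ( C(ℓ−2, δ)·C(n−ℓ−2, δ−1) + C(ℓ−2, δ−1)·C(n−ℓ−2, δ) ). Then the sequence (N(ℓ))_{2 ≤ ℓ ≤ n−2} is symmetric, i.e. N(ℓ) = N(n−ℓ) for all 2 ≤ ℓ ≤ n−2, and unimodal, i.e. there exists m with 2 ≤ m ≤ n−2 such that N(ℓ) ≤ N(ℓ+1) for all 2 ≤ ℓ ≤ m−1 and N(ℓ) ≥ N(ℓ+1) for all m ≤ ℓ ≤ n−3. -/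
/-- The number of coherent monotone paths of length `ℓ` on the cyclic polytope
`cyc_d` with `n` vertices, in the direction `e₁`:
`N(ℓ) = ∑_{δ ≥ 1, 2δ ≤ d-1} 2·C(ℓ-2, δ-1)·C(n-ℓ-2, δ-1)
      + ∑_{δ ≥ 1, 2δ+1 ≤ d-1} (C(ℓ-2, δ)·C(n-ℓ-2, δ-1) + C(ℓ-2, δ-1)·C(n-ℓ-2, δ))`.
(Note `δ ≥ 1 ∧ 2δ ≤ d-1 ↔ δ ∈ Icc 1 ((d-1)/2)` and
`δ ≥ 1 ∧ 2δ+1 ≤ d-1 ↔ δ ∈ Icc 1 ((d-2)/2)`.) -/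
def cycCohCount (d n ℓ : ℕ) : ℕ :=
  (∑ δ ∈ Finset.Icc 1 ((d - 1) / 2),
      2 * Nat.choose (ℓ - 2) (δ - 1) * Nat.choose (n - ℓ - 2) (δ - 1)) +
  (∑ δ ∈ Finset.Icc 1 ((d - 2) / 2),
      (Nat.choose (ℓ - 2) δ * Nat.choose (n - ℓ - 2) (δ - 1) +
        Nat.choose (ℓ - 2) (δ - 1) * Nat.choose (n - ℓ - 2) δ)) 

theorem cyc_choose_aux (a c i j : ℕ) (h : a ≤ c) (hij : i ≤ j) :
    a.choose j * c.choose i ≤ a.choose i * c.choose j := by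
  induction j, hij using Nat.le_induction with
  | base => exact le_rfl
  | succ j _ ih =>
    refine Nat.le_of_mul_le_mul_right (c := j + 1) ?_ (Nat.succ_pos j)
    have h1 := Nat.choose_succ_right_eq a j
    have h2 := Nat.choose_succ_right_eq c j
    calc a.choose (j + 1) * c.choose i * (j + 1)
        = (a.choose (j + 1) * (j + 1)) * c.choose i := by ring
      _ = (a.choose j * c.choose i) * (a - j) := by rw [h1]; ring
      _ ≤ (a.choose i * c.choose j) * (c - j) :=
          Nat.mul_le_mul ih (Nat.sub_le_sub_right h j)
      _ = a.choose i * (c.choose j * (c - j)) := by ring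
      _ = a.choose i * c.choose (j + 1) * (j + 1) := by rw [← h2]; ring

def cycF (d a b : ℕ) : ℕ :=
  (∑ δ ∈ Finset.Icc 1 ((d - 1) / 2), 2 * Nat.choose a (δ - 1) * Nat.choose b (δ - 1)) +
  (∑ δ ∈ Finset.Icc 1 ((d - 2) / 2),
      (Nat.choose a δ * Nat.choose b (δ - 1) + Nat.choose a (δ - 1) * Nat.choose b δ))

theorem cycF_comm (d a b : ℕ) : cycF d a b = cycF d b a := by
  unfold cycF
  congr 1
  · exact Finset.sum_congr rfl fun _ _ => by ring
  · exact Finset.sum_congr rfl fun _ _ => by ring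

theorem cycF_mono (d a c : ℕ) (h : a ≤ c) : cycF d a (c + 1) ≤ cycF d (a + 1) c := by
  unfold cycF
  refine Nat.add_le_add (Finset.sum_le_sum fun δ hδ => ?_) (Finset.sum_le_sum fun δ hδ => ?_)
  · obtain ⟨k, rfl⟩ := Nat.exists_eq_add_of_le' (Finset.mem_Icc.1 hδ).1
    simp only [Nat.add_sub_cancel]
    rcases k with _ | k
    · simp
    · have := cyc_choose_aux a c k (k + 1) h (by omega)
      simp only [Nat.choose_succ_succ'] at this ⊢
      nlinarith
  · obtain ⟨k, rfl⟩ := Nat.exists_eq_add_of_le' (Finset.mem_Icc.1 hδ).1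
    simp only [Nat.add_sub_cancel]
    rcases k with _ | k
    · simp; omega
    · have := cyc_choose_aux a c k (k + 2) h (by omega)
      rw [Nat.choose_succ_succ' a (k + 1), Nat.choose_succ_succ' a k,
        Nat.choose_succ_succ' c (k + 1), Nat.choose_succ_succ' c k]
      nlinarith

theorem cycCohCount_eq (d n l : ℕ) : cycCohCount d n l = cycF d (l - 2) (n - l - 2) := rfl

/-- the sequence `(N(ℓ))_{2 ≤ ℓ ≤ n-2}` is symmetric and unimodal. -/
theorem cycCohCount_symmetric_unimodal (d n : ℕ) (hd : 4 ≤ d) (hn : d + 1 ≤ n) :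
    (∀ ℓ : ℕ, 2 ≤ ℓ → ℓ ≤ n - 2 → cycCohCount d n ℓ = cycCohCount d n (n - ℓ)) ∧
    (∃ m : ℕ, 2 ≤ m ∧ m ≤ n - 2 ∧
      (∀ ℓ : ℕ, 2 ≤ ℓ → ℓ ≤ m - 1 → cycCohCount d n ℓ ≤ cycCohCount d n (ℓ + 1)) ∧
      (∀ ℓ : ℕ, m ≤ ℓ → ℓ ≤ n - 3 → cycCohCount d n (ℓ + 1) ≤ cycCohCount d n ℓ)) := by
  refine ⟨fun l h1 h2 => ?_, n / 2, by omega, by omega, fun l h1 h2 => ?_, fun l h1 h2 => ?_⟩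
  · rw [cycCohCount_eq, cycCohCount_eq, cycF_comm, show n - (n - l) - 2 = l - 2 by omega]
  · rw [cycCohCount_eq, cycCohCount_eq, show n - l - 2 = (n - (l + 1) - 2) + 1 by omega,
      show l + 1 - 2 = (l - 2) + 1 by omega]
    exact cycF_mono _ _ _ (by omega)
  · rw [cycCohCount_eq, cycCohCount_eq, show n - l - 2 = (n - (l + 1) - 2) + 1 by omega,
      show l + 1 - 2 = (l - 2) + 1 by omega, cycF_comm, cycF_comm d (l - 2)]
    exact cycF_mono _ _ _ (by omega)
end

section
/- Let p be a nonzero polynomial with real coefficients all of whose roots are real, i.e. the multiset of its roots in ℝ has cardinality equal to the degree of p. Then the polynomial q = X · (X · p)′ (the product of X with the derivative of X·p) is nonzero and all of its roots are real: the multiset of real roots of q has cardinality equal to the degree of q. -/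
open Polynomial

/-- if `p` is a nonzero real polynomial all of whose roots are real
(i.e. the multiset of its real roots has cardinality `natDegree p`), then
`q = X · (X·p)'` is nonzero and all of its roots are real. -/
theorem realRooted_prism_transform (p : ℝ[X]) (hp : p ≠ 0)
    (hroots : (Multiset.card p.roots) = p.natDegree) :
    X * derivative (X * p) ≠ 0 ∧
      Multiset.card (X * derivative (X * p)).roots =
        (X * derivative (X * p)).natDegree := by
  have hXp : X * p ≠ 0 := mul_ne_zero X_ne_zero hp
  have hdeg : (X * p).natDegree = p.natDegree + 1 := natDegree_X_mul hp
  have hd : derivative (X * p) ≠ 0 := by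
    intro h
    have := natDegree_eq_zero_of_derivative_eq_zero h
    omega
  have hq : X * derivative (X * p) ≠ 0 := mul_ne_zero X_ne_zero hd
  refine ⟨hq, ?_⟩
  have h1 := card_roots_le_derivative (X * p)
  have h2 := card_roots' (derivative (X * p))
  have h3 := natDegree_derivative_le (X * p)
  rw [roots_mul hXp, roots_X, Multiset.card_add, Multiset.card_singleton, hroots] at h1
  rw [roots_mul hq, roots_X, Multiset.card_add, Multiset.card_singleton, natDegree_X_mul hd]
  omega
end

section
/- Fix an integer d ≥ 4 and set β = d/2 − 2 (so β ≥ 0). For ε ∈ (0, 1/2) let m(ε) be the largest natural number k for which there exist points p₁, …, p_k ∈ 𝔻 ∖ {0} such that μ_β(C_{p_i}) = ε for every i and the caps C_{p₁}, …, C_{p_k} are pairwise disjoint. Then there exists a constant c > 0 such that m(ε)·ε^{1/(d−1)} tends to c as ε → 0 from the right. -/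
open MeasureTheory

/-- The `β`-distribution on the closed unit disk of `ℝ²`: the measure with density
`x ↦ ((β+1)/π)·(1-‖x‖²)^β` on the disk (and `0` outside) w.r.t. Lebesgue measure. -/
noncomputable def betaMeasure (β : ℝ) : Measure (EuclideanSpace ℝ (Fin 2)) :=
  volume.withDensity fun x =>
    ENNReal.ofReal (if ‖x‖ ≤ 1 then (β + 1) / Real.pi * (1 - ‖x‖ ^ 2) ^ β else 0)

/-- The cap of the unit disk induced by a point `p`: `C_p = {x ∈ 𝔻 : ⟨x - p, p⟩ ≥ 0}`. -/
def diskCap (p : EuclideanSpace ℝ (Fin 2)) : Set (EuclideanSpace ℝ (Fin 2)) :=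
  {x | ‖x‖ ≤ 1 ∧ (0 : ℝ) ≤ inner ℝ (x - p) p}

/-- `mEps β ε`: the maximal number of pairwise disjoint `ε`-caps, i.e. the largest `k`
for which there exist `p₁, …, p_k ∈ 𝔻 ∖ {0}` with `μ_β(C_{p_i}) = ε` and the caps
pairwise disjoint. -/
noncomputable def mEps (β ε : ℝ) : ℕ :=
  sSup {k : ℕ | ∃ p : Fin k → EuclideanSpace ℝ (Fin 2),
    (∀ i, p i ≠ 0 ∧ ‖p i‖ ≤ 1 ∧ betaMeasure β (diskCap (p i)) = ENNReal.ofReal ε) ∧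
    Pairwise fun i j => Disjoint (diskCap (p i)) (diskCap (p j))}

noncomputable def sliceK (β : ℝ) : ENNReal :=
  ∫⁻ y : ℝ, ENNReal.ofReal (if y ^ 2 ≤ 1 then (1 - y ^ 2) ^ β else 0)

lemma meas_slice (β : ℝ) :
    Measurable fun y : ℝ => ENNReal.ofReal (if y ^ 2 ≤ 1 then (1 - y ^ 2) ^ β else 0) := by
  apply Measurable.ennreal_ofReal
  apply Measurable.ite
  · exact measurableSet_le (by fun_prop) (by fun_prop)
  · fun_prop
  · fun_prop

lemma sliceK_ne_top (β : ℝ) (hβ : 0 ≤ β) : sliceK β ≠ ⊤ := by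
  have : sliceK β ≤ ∫⁻ y : ℝ, (Set.Icc (-1 : ℝ) 1).indicator (fun _ => 1) y := by
    apply lintegral_mono
    intro y
    dsimp only
    by_cases h : y ^ 2 ≤ 1
    · have hy : y ∈ Set.Icc (-1 : ℝ) 1 := by
        constructor <;> nlinarith
      rw [if_pos h, Set.indicator_of_mem hy, ENNReal.ofReal_le_one]
      exact Real.rpow_le_one (by linarith) (by nlinarith [sq_nonneg y]) hβ
    · simp [h]
  refine ne_top_of_le_ne_top ?_ this
  rw [lintegral_indicator_const measurableSet_Icc]
  simp

lemma sliceK_ne_zero (β : ℝ) (hβ : 0 ≤ β) : sliceK β ≠ 0 := by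
  have : ∫⁻ y : ℝ, (Set.Icc (0 : ℝ) (1/2)).indicator (fun _ => ENNReal.ofReal ((3/4) ^ β)) y
      ≤ sliceK β := by
    apply lintegral_mono
    intro y
    dsimp only
    by_cases hy : y ∈ Set.Icc (0 : ℝ) (1/2)
    · have h : y ^ 2 ≤ 1/4 := by nlinarith [hy.1, hy.2]
      rw [if_pos (by linarith), Set.indicator_of_mem hy]
      apply ENNReal.ofReal_le_ofReal
      exact Real.rpow_le_rpow (by norm_num) (by linarith) hβ
    · rw [Set.indicator_of_notMem hy]; exact zero_le
  rw [lintegral_indicator_const measurableSet_Icc] at this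
  intro h0
  rw [h0, nonpos_iff_eq_zero, mul_eq_zero] at this
  rcases this with h | h
  · rw [ENNReal.ofReal_eq_zero] at h
    have : (0:ℝ) < (3/4) ^ β := by positivity
    linarith
  · simp at h

lemma slice_eq (β c s : ℝ) (hc : 0 ≤ c) (hs : s ^ 2 < 1) :
    ∫⁻ y : ℝ, ENNReal.ofReal (if s ^ 2 + y ^ 2 ≤ 1 then c * (1 - (s ^ 2 + y ^ 2)) ^ β else 0)
      = ENNReal.ofReal (c * (1 - s ^ 2) ^ (β + 1/2)) * sliceK β := by
  have hpos : 0 < 1 - s ^ 2 := by linarith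
  set r := Real.sqrt (1 - s ^ 2) with hr
  have hr0 : 0 < r := Real.sqrt_pos.2 hpos
  have hr2 : r ^ 2 = 1 - s ^ 2 := Real.sq_sqrt hpos.le
  conv_lhs => rw [← Real.smul_map_volume_mul_left hr0.ne']
  rw [lintegral_smul_measure, lintegral_map _ (by fun_prop)]
  · have : ∀ y : ℝ, ENNReal.ofReal (if s ^ 2 + (r * y) ^ 2 ≤ 1
        then c * (1 - (s ^ 2 + (r * y) ^ 2)) ^ β else 0)
        = ENNReal.ofReal (c * (1 - s ^ 2) ^ β) *
          ENNReal.ofReal (if y ^ 2 ≤ 1 then (1 - y ^ 2) ^ β else 0) := by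
      intro y
      rw [← ENNReal.ofReal_mul (by positivity)]
      congr 1
      have e : s ^ 2 + (r * y) ^ 2 = 1 - (1 - s ^ 2) * (1 - y ^ 2) := by
        rw [mul_pow, hr2]; ring
      by_cases h : y ^ 2 ≤ 1
      · rw [if_pos h, if_pos (by rw [e]; nlinarith), e, sub_sub_cancel,
          Real.mul_rpow hpos.le (by linarith)]
        ring
      · rw [if_neg h, if_neg (by rw [e]; push Not at h ⊢; nlinarith), mul_zero]
    simp_rw [this]
    rw [lintegral_const_mul _ (meas_slice β), smul_eq_mul, ← mul_assoc,
      ← ENNReal.ofReal_mul (abs_nonneg _), abs_of_pos hr0, Real.rpow_add hpos,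
      ← Real.sqrt_eq_rpow, ← hr]
    congr 2
    ring
  · apply Measurable.ennreal_ofReal
    apply Measurable.ite
    · exact measurableSet_le (by fun_prop) (by fun_prop)
    · fun_prop
    · fun_prop

noncomputable def capG (q α : ℝ) : ℝ := ∫ s in (Real.cos α)..1, (1 - s ^ 2) ^ q

lemma cap_coord (β : ℝ) (p : EuclideanSpace ℝ (Fin 2)) (hp : p ≠ 0) :
    betaMeasure β (diskCap p) = ∫⁻ s : ℝ, ∫⁻ y : ℝ,
      (Set.Ici ‖p‖).indicator (fun _ => ENNReal.ofReal (if s ^ 2 + y ^ 2 ≤ 1 then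
        (β + 1) / Real.pi * (1 - (s ^ 2 + y ^ 2)) ^ β else 0)) s := by
  have hpn : 0 < ‖p‖ := norm_pos_iff.2 hp
  obtain ⟨b, hb⟩ := Orthonormal.exists_orthonormalBasis_extension_of_card_eq (𝕜 := ℝ)
    (E := EuclideanSpace ℝ (Fin 2)) (ι := Fin 2) (by simp) (v := fun _ => ‖p‖⁻¹ • p) (s := {0}) (by
      constructor
      · intro i
        simp [Set.domRestrict, norm_smul, hpn.ne']
      · intro i j hij
        exact absurd (Subsingleton.elim i j) hij)
  have hb0 : b 0 = ‖p‖⁻¹ • p := hb 0 rfl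
  have hmeas : MeasurableSet (diskCap p) := by
    have h1 : MeasurableSet {x : EuclideanSpace ℝ (Fin 2) | ‖x‖ ≤ 1} :=
      (isClosed_le (by fun_prop) (by fun_prop)).measurableSet
    have h2 : MeasurableSet {x : EuclideanSpace ℝ (Fin 2) | (0 : ℝ) ≤ inner ℝ (x - p) p} :=
      (isClosed_le (by fun_prop) (by fun_prop)).measurableSet
    exact h1.inter h2
  let g : ℝ × ℝ → ENNReal := fun z =>
      (Set.Ici ‖p‖).indicator (fun _ => ENNReal.ofReal (if z.1 ^ 2 + z.2 ^ 2 ≤ 1 then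
        (β + 1) / Real.pi * (1 - (z.1 ^ 2 + z.2 ^ 2)) ^ β else 0)) z.1
  have hg : Measurable g := by
    have : g = (Prod.fst ⁻¹' (Set.Ici ‖p‖)).indicator (fun z : ℝ × ℝ =>
      ENNReal.ofReal (if z.1 ^ 2 + z.2 ^ 2 ≤ 1 then
        (β + 1) / Real.pi * (1 - (z.1 ^ 2 + z.2 ^ 2)) ^ β else 0)) := by
      ext z; simp [g, Set.indicator]
    rw [this]
    apply Measurable.indicator
    · apply Measurable.ennreal_ofReal
      apply Measurable.ite
      · exact measurableSet_le (by fun_prop) (by fun_prop)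
      · fun_prop
      · fun_prop
    · exact measurable_fst measurableSet_Ici
  have key : ∀ x : EuclideanSpace ℝ (Fin 2), (diskCap p).indicator (fun x =>
      ENNReal.ofReal (if ‖x‖ ≤ 1 then (β + 1) / Real.pi * (1 - ‖x‖ ^ 2) ^ β else 0)) x
      = g (b.repr x 0, b.repr x 1) := by
    intro x
    have hn : ‖x‖ ^ 2 = (b.repr x 0) ^ 2 + (b.repr x 1) ^ 2 := by
      rw [← b.repr.norm_map x, EuclideanSpace.norm_sq_eq]
      simp [Fin.sum_univ_two]
    have hi : b.repr x 0 = ‖p‖⁻¹ * inner ℝ x p := by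
      rw [b.repr_apply_apply, hb0, real_inner_comm, inner_smul_right]
    have hiff : (0 : ℝ) ≤ inner ℝ (x - p) p ↔ ‖p‖ ≤ b.repr x 0 := by
      rw [hi, inner_sub_left, real_inner_self_eq_norm_sq, sub_nonneg, inv_mul_eq_div,
        le_div_iff₀ hpn, sq]
    have hle : ‖x‖ ≤ 1 ↔ (b.repr x 0) ^ 2 + (b.repr x 1) ^ 2 ≤ 1 := by
      rw [← hn]; exact (sq_le_one_iff₀ (norm_nonneg x)).symm
    simp only [g, Set.indicator, diskCap, Set.mem_ofPred_eq, Set.mem_Ici, hiff, hle, hn]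
    by_cases h1 : (b.repr x 0) ^ 2 + (b.repr x 1) ^ 2 ≤ 1 <;> simp [h1]
  have hmp : MeasurePreserving (fun x : EuclideanSpace ℝ (Fin 2) => (b.repr x 0, b.repr x 1)) := by
    have h1 := b.measurePreserving_repr
    have h2 := (EuclideanSpace.volume_preserving_symm_measurableEquiv_toLp (Fin 2))
    have h3 := volume_preserving_finTwoArrow ℝ
    exact h3.comp (h2.comp h1)
  rw [betaMeasure, withDensity_apply _ hmeas, ← lintegral_indicator hmeas]
  simp_rw [key]
  rw [hmp.lintegral_comp hg, Measure.volume_eq_prod, lintegral_prod _ hg.aemeasurable]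

lemma cap_measure (β : ℝ) (hβ : 0 ≤ β) (p : EuclideanSpace ℝ (Fin 2)) (hp : p ≠ 0)
    (α : ℝ) (hα : Real.cos α = ‖p‖) :
    betaMeasure β (diskCap p) =
      ENNReal.ofReal ((β + 1) / Real.pi * (sliceK β).toReal * capG (β + 1/2) α) := by
  have hpn : 0 < ‖p‖ := norm_pos_iff.2 hp
  have hp1 : ‖p‖ ≤ 1 := hα ▸ Real.cos_le_one α
  have hc : 0 ≤ (β + 1) / Real.pi := by positivity
  rw [cap_coord β p hp]
  have hq : 0 ≤ β + 1/2 := by linarith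
  have hcont : Continuous fun s : ℝ => (1 - s ^ 2) ^ (β + 1/2) :=
    Continuous.rpow_const (by fun_prop) (fun _ => Or.inr hq)
  have : ∀ᵐ s : ℝ, (∫⁻ y : ℝ,
      (Set.Ici ‖p‖).indicator (fun _ => ENNReal.ofReal (if s ^ 2 + y ^ 2 ≤ 1 then
        (β + 1) / Real.pi * (1 - (s ^ 2 + y ^ 2)) ^ β else 0)) s) =
      (Set.Ioc ‖p‖ 1).indicator (fun s => ENNReal.ofReal ((β + 1) / Real.pi *
        (1 - s ^ 2) ^ (β + 1/2)) * sliceK β) s := by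
    have h1 : ∀ᵐ s : ℝ, s ≠ 1 := Measure.ae_ne volume 1
    have h2 : ∀ᵐ s : ℝ, s ≠ ‖p‖ := Measure.ae_ne volume _
    filter_upwards [h1, h2] with s hs1 hs2
    rcases lt_or_ge s ‖p‖ with h | h
    · simp [Set.indicator, h, h.not_ge, h.le.not_gt]
    · have h' : ‖p‖ < s := lt_of_le_of_ne h (Ne.symm hs2)
      simp only [Set.indicator, Set.mem_Ici, h, if_true, Set.mem_Ioc, h', true_and]
      rcases lt_or_ge s 1 with h3 | h3
      · rw [if_pos h3.le]
        exact slice_eq β _ s hc (by nlinarith)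
      · have h3 : 1 < s := lt_of_le_of_ne h3 (Ne.symm hs1)
        rw [if_neg (by linarith)]
        have : ∀ y : ℝ, ¬ (s ^ 2 + y ^ 2 ≤ 1) := by intro y; nlinarith [sq_nonneg y]
        simp [this]
  rw [lintegral_congr_ae this, lintegral_indicator measurableSet_Ioc,
    lintegral_mul_const _ (by fun_prop), ← ofReal_integral_eq_lintegral_ofReal, capG,
    hα, intervalIntegral.integral_of_le hp1, integral_const_mul, mul_right_comm,
    ENNReal.ofReal_mul' ENNReal.toReal_nonneg, ENNReal.ofReal_toReal (sliceK_ne_top β hβ)]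
  · exact (((continuous_const.mul hcont).integrableOn_Icc).mono_set Set.Ioc_subset_Icc_self)
  · refine (ae_restrict_iff' measurableSet_Ioc).2 (Filter.Eventually.of_forall ?_)
    intro s hs
    have : 0 ≤ 1 - s ^ 2 := by nlinarith [hs.1, hs.2]
    positivity
open Filter Topology in
lemma capG_hasDeriv (q : ℝ) (hq : 0 ≤ q) (α : ℝ) :
    HasDerivAt (capG q) ((Real.sin α ^ 2) ^ q * Real.sin α) α := by
  have hcont : Continuous fun s : ℝ => (1 - s ^ 2) ^ q :=
    Continuous.rpow_const (by fun_prop) (fun _ => Or.inr hq)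
  have h1 : HasDerivAt (fun t => ∫ s in t..1, (1 - s ^ 2) ^ q) (-(1 - Real.cos α ^ 2) ^ q)
      (Real.cos α) :=
    intervalIntegral.integral_hasDerivAt_left (hcont.intervalIntegrable _ _)
      (hcont.stronglyMeasurableAtFilter _ _) hcont.continuousAt
  have h2 := h1.comp α (Real.hasDerivAt_cos α)
  have e : (Real.sin α ^ 2) ^ q * Real.sin α = -(1 - Real.cos α ^ 2) ^ q * -Real.sin α := by
    rw [← Real.sin_sq]; ring
  rw [e]
  exact h2

lemma capG_zero (q : ℝ) : capG q 0 = 0 := by simp [capG]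

lemma capG_strictMono (q : ℝ) (hq : 0 ≤ q) :
    StrictMonoOn (capG q) (Set.Icc 0 (Real.pi / 2)) := by
  apply strictMonoOn_of_deriv_pos (convex_Icc _ _)
  · exact fun x _ => (capG_hasDeriv q hq x).continuousAt.continuousWithinAt
  · intro x hx
    rw [interior_Icc] at hx
    rw [(capG_hasDeriv q hq x).deriv]
    have : 0 < Real.sin x := Real.sin_pos_of_pos_of_lt_pi hx.1 (by linarith [hx.2, Real.pi_pos])
    positivity

open Filter Topology in
lemma capG_lim (n : ℕ) (q : ℝ) (hq : 0 ≤ q) (hn : 2 * q + 1 = n) :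
    Tendsto (fun α => capG q α / α ^ (n + 1)) (𝓝[>] 0) (𝓝 (1 / ((n : ℝ) + 1))) := by
  have hn0 : (0 : ℝ) ≤ n := by positivity
  have hev : ∀ᶠ x : ℝ in 𝓝[>] 0, 0 < x ∧ x < Real.pi :=
    Ioo_mem_nhdsGT Real.pi_pos
  refine HasDerivAt.lhopital_zero_nhdsGT (f' := fun α => (Real.sin α ^ 2) ^ q * Real.sin α)
    (g' := fun α => ((n + 1 : ℕ) : ℝ) * α ^ n) ?_ ?_ ?_ ?_ ?_ ?_
  · exact Eventually.of_forall fun x => capG_hasDeriv q hq x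
  · exact Eventually.of_forall fun x => by simpa using hasDerivAt_pow (n + 1) x
  · filter_upwards [hev] with x hx
    have := hx.1
    positivity
  · have := (capG_hasDeriv q hq 0).continuousAt.tendsto
    rw [capG_zero] at this
    exact this.mono_left nhdsWithin_le_nhds
  · have : Tendsto (fun x : ℝ => x ^ (n + 1)) (𝓝 0) (𝓝 (0 ^ (n+1))) :=
      (continuous_pow (n + 1)).tendsto 0
    rw [zero_pow (by omega)] at this
    exact this.mono_left nhdsWithin_le_nhds
  · have hs : Tendsto (fun x : ℝ => Real.sin x / x) (𝓝[>] 0) (𝓝 1) := by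
      have := (hasDerivAt_iff_tendsto_slope.1 (Real.hasDerivAt_sin 0))
      rw [Real.cos_zero] at this
      refine (this.mono_left (nhdsWithin_mono 0 (fun x hx => ne_of_gt hx))).congr ?_
      intro x
      simp [slope_def_field]
    have := (hs.pow n).mul_const (1 / ((n : ℝ) + 1))
    rw [one_pow, one_mul] at this
    refine this.congr' ?_
    filter_upwards [hev] with x hx
    have hx0 := hx.1
    have hsin : 0 < Real.sin x := Real.sin_pos_of_pos_of_lt_pi hx.1 hx.2
    have : (Real.sin x ^ 2) ^ q * Real.sin x = Real.sin x ^ n := by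
      rw [← Real.rpow_natCast _ n, ← hn, Real.rpow_add hsin, Real.rpow_mul hsin.le]
      simp
    rw [this]
    push_cast
    rw [div_pow]
    field_simp
noncomputable def dirv (θ : ℝ) : EuclideanSpace ℝ (Fin 2) := !₂[Real.cos θ, Real.sin θ]

lemma norm_dirv (θ : ℝ) : ‖dirv θ‖ = 1 := by
  rw [EuclideanSpace.norm_eq]; simp [dirv, Fin.sum_univ_two]

lemma inner_dirv (x : EuclideanSpace ℝ (Fin 2)) (θ : ℝ) :
    inner ℝ x (dirv θ) = x 0 * Real.cos θ + x 1 * Real.sin θ := by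
  simp [dirv, PiLp.inner_apply, Fin.sum_univ_two]; ring

lemma inner_dirv_dirv (θ φ : ℝ) : inner ℝ (dirv θ) (dirv φ) = Real.cos (θ - φ) := by
  rw [inner_dirv, Real.cos_sub]; simp [dirv]

lemma mem_diskCap_dirv (t θ : ℝ) (ht : 0 < t) (x : EuclideanSpace ℝ (Fin 2)) :
    x ∈ diskCap (t • dirv θ) ↔ ‖x‖ ≤ 1 ∧ t ≤ inner ℝ x (dirv θ) := by
  simp only [diskCap, Set.mem_ofPred_eq, inner_sub_left, inner_smul_left, inner_smul_right,
    real_inner_self_eq_norm_sq, norm_dirv]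
  simp only [conj_trivial]
  refine and_congr_right fun _ => ?_
  constructor
  · intro h; nlinarith
  · intro h; nlinarith

lemma exists_dirv (p : EuclideanSpace ℝ (Fin 2)) : ∃ θ : ℝ, p = ‖p‖ • dirv θ := by
  let z : ℂ := ⟨p 0, p 1⟩
  have hz : ‖z‖ = ‖p‖ := by
    rw [EuclideanSpace.norm_eq, Complex.norm_eq_sqrt_sq_add_sq]; simp [z, Fin.sum_univ_two]
  refine ⟨Complex.arg z, ?_⟩
  ext i
  have h1 := Complex.norm_mul_cos_arg z
  have h2 := Complex.norm_mul_sin_arg z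
  rw [hz] at h1 h2
  fin_cases i
  · simpa [dirv] using h1.symm
  · simpa [dirv] using h2.symm

lemma caps_upper (α : ℝ) (h0 : 0 < α) (h1 : α < Real.pi / 2) (k : ℕ) (θ : Fin k → ℝ)
    (hd : Pairwise fun i j => Disjoint (diskCap (Real.cos α • dirv (θ i)))
      (diskCap (Real.cos α • dirv (θ j)))) : (k : ℝ) * α ≤ Real.pi := by
  have hpi := Real.pi_pos
  have : Fact (0 < 2 * Real.pi) := ⟨by positivity⟩
  have hcos : 0 < Real.cos α := Real.cos_pos_of_mem_Ioo ⟨by linarith, h1⟩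
  have hdis : Pairwise (Function.onFun Disjoint fun i =>
      Metric.closedBall ((θ i : ℝ) : AddCircle (2 * Real.pi)) α) := by
    intro i j hij
    rw [Function.onFun, Set.disjoint_left]
    intro x hx hy
    induction x using QuotientAddGroup.induction_on with
    | H x =>
    have key : ∀ i, ((x : ℝ) : AddCircle (2 * Real.pi)) ∈
        Metric.closedBall ((θ i : ℝ) : AddCircle (2 * Real.pi)) α →
        dirv x ∈ diskCap (Real.cos α • dirv (θ i)) := by
      intro i hx
      have hx' : x ∈ ((↑) : ℝ → AddCircle (2 * Real.pi)) ⁻¹'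
        Metric.closedBall ((θ i : ℝ) : AddCircle (2 * Real.pi)) α := hx
      rw [AddCircle.coe_real_preimage_closedBall_eq_iUnion, Set.mem_iUnion] at hx'
      obtain ⟨z, hz⟩ := hx'
      rw [mem_diskCap_dirv _ _ hcos, norm_dirv, inner_dirv_dirv]
      refine ⟨le_rfl, ?_⟩
      rw [Metric.mem_closedBall, Real.dist_eq, zsmul_eq_mul] at hz
      have : Real.cos (x - θ i) = Real.cos |x - (θ i + z * (2 * Real.pi))| := by
        rw [Real.cos_abs, ← sub_sub, Real.cos_sub_int_mul_two_pi]
      rw [this]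
      exact Real.cos_le_cos_of_nonneg_of_le_pi (abs_nonneg _) (by linarith) hz
    exact Set.disjoint_left.1 (hd hij) (key i hx) (key j hy)
  have hm := measure_iUnion (μ := (volume : Measure (AddCircle (2 * Real.pi)))) hdis
    (fun i => Metric.isClosed_closedBall.measurableSet)
  have hle : volume (⋃ i, Metric.closedBall ((θ i : ℝ) : AddCircle (2 * Real.pi)) α)
      ≤ ENNReal.ofReal (2 * Real.pi) := by
    rw [← AddCircle.measure_univ]; exact measure_mono (Set.subset_univ _)
  rw [hm] at hle
  simp only [AddCircle.volume_closedBall, tsum_fintype, Finset.sum_const, Finset.card_univ,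
    Fintype.card_fin, nsmul_eq_mul] at hle
  rw [min_eq_right (by linarith), ← ENNReal.ofReal_natCast, ← ENNReal.ofReal_mul (by positivity),
    ENNReal.ofReal_le_ofReal_iff (by positivity)] at hle
  linarith

lemma caps_lower (α : ℝ) (h0 : 0 < α) (h1 : α < Real.pi / 2) (k : ℕ) (hk : k * α < Real.pi) :
    Pairwise fun i j : Fin k => Disjoint (diskCap (Real.cos α • dirv (2 * Real.pi * i / k)))
      (diskCap (Real.cos α • dirv (2 * Real.pi * j / k))) := by
  have hpi := Real.pi_pos
  have hcos : 0 < Real.cos α := Real.cos_pos_of_mem_Ioo ⟨by linarith, h1⟩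
  have main : ∀ i j : Fin k, i < j → Disjoint (diskCap (Real.cos α • dirv (2 * Real.pi * i / k)))
      (diskCap (Real.cos α • dirv (2 * Real.pi * j / k))) := by
    intro i j hij
    have hkpos : (0 : ℝ) < k := by exact_mod_cast (Nat.zero_le _).trans_lt i.2
    rw [Set.disjoint_left]
    intro x hx hy
    rw [mem_diskCap_dirv _ _ hcos] at hx hy
    obtain ⟨hx1, hx⟩ := hx
    obtain ⟨-, hy⟩ := hy
    set A := 2 * Real.pi * i / k
    set B := 2 * Real.pi * j / k
    have hij1 : (i : ℝ) + 1 ≤ j := by exact_mod_cast hij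
    have hjk : (j : ℝ) + 1 ≤ k := by exact_mod_cast j.2
    have hi0 : (0 : ℝ) ≤ i := by positivity
    have hαk : α < Real.pi / k := by rw [lt_div_iff₀ hkpos]; linarith
    have hd1 : Real.pi / k ≤ (B - A) / 2 := by
      have : (B - A) / 2 = (j - i) * (Real.pi / k) := by simp only [A, B]; field_simp
      rw [this]
      nlinarith [div_pos hpi hkpos]
    have hd2 : (B - A) / 2 ≤ Real.pi - Real.pi / k := by
      have : (B - A) / 2 = (j - i) * (Real.pi / k) := by simp only [A, B]; field_simp
      have h2 : Real.pi - Real.pi / k = (k - 1) * (Real.pi / k) := by field_simp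
      rw [this, h2]
      nlinarith [div_pos hpi hkpos]
    have hc1 : Real.cos ((B - A) / 2) < Real.cos α :=
      Real.cos_lt_cos_of_nonneg_of_le_pi h0.le (by linarith) (by linarith)
    have hc2 : -Real.cos α < Real.cos ((B - A) / 2) := by
      rw [← Real.cos_pi_sub]
      exact Real.cos_lt_cos_of_nonneg_of_le_pi (by linarith) (by linarith) (by linarith)
    have hsum : inner ℝ x (dirv A) + inner ℝ x (dirv B) =
        2 * Real.cos ((B - A) / 2) * inner ℝ x (dirv ((A + B) / 2)) := by
      simp only [inner_dirv]
      have hA : A = (A + B) / 2 - (B - A) / 2 := by ring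
      have hB : B = (A + B) / 2 + (B - A) / 2 := by ring
      have e1 := Real.cos_sub ((A + B) / 2) ((B - A) / 2)
      have e2 := Real.sin_sub ((A + B) / 2) ((B - A) / 2)
      have e3 := Real.cos_add ((A + B) / 2) ((B - A) / 2)
      have e4 := Real.sin_add ((A + B) / 2) ((B - A) / 2)
      rw [← hA] at e1 e2
      rw [← hB] at e3 e4
      rw [e1, e2, e3, e4]; ring
    have hab : |inner ℝ x (dirv ((A + B) / 2))| ≤ 1 := by
      refine (abs_real_inner_le_norm _ _).trans ?_
      rw [norm_dirv, mul_one]; exact hx1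
    have hC : |Real.cos ((B - A) / 2)| < Real.cos α := abs_lt.2 ⟨hc2, hc1⟩
    have : |Real.cos ((B - A) / 2) * inner ℝ x (dirv ((A + B) / 2))| < Real.cos α := by
      rw [abs_mul]
      exact (mul_le_of_le_one_right (abs_nonneg _) hab).trans_lt hC
    have := (le_abs_self _).trans_lt this
    linarith
  intro i j hij
  rcases lt_or_gt_of_ne hij with h | h
  · exact main i j h
  · exact (main j i h).symm
noncomputable def capM (β : ℝ) : ℝ := (β + 1) / Real.pi * (sliceK β).toReal

lemma capM_pos (β : ℝ) (hβ : 0 ≤ β) : 0 < capM β := by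
  have := ENNReal.toReal_pos (sliceK_ne_zero β hβ) (sliceK_ne_top β hβ)
  have := Real.pi_pos
  unfold capM
  positivity

lemma mEps_bounds (β : ℝ) (hβ : 0 ≤ β) (α : ℝ) (h0 : 0 < α) (h1 : α < Real.pi / 2) :
    Real.pi - α ≤ mEps β (capM β * capG (β + 1/2) α) * α ∧
    mEps β (capM β * capG (β + 1/2) α) * α ≤ Real.pi := by
  have hpi := Real.pi_pos
  have hq : 0 ≤ β + 1/2 := by linarith
  have hM := capM_pos β hβ
  have hmono := capG_strictMono (β + 1/2) hq
  have hcos : 0 < Real.cos α := Real.cos_pos_of_mem_Ioo ⟨by linarith, h1⟩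
  have hnn : ∀ x ∈ Set.Icc 0 (Real.pi / 2), 0 ≤ capG (β + 1/2) x := by
    intro x hx
    rw [← capG_zero (β + 1/2)]
    exact hmono.monotoneOn ⟨le_rfl, by linarith⟩ hx hx.1
  have hup : ∀ k ∈ {k : ℕ | ∃ p : Fin k → EuclideanSpace ℝ (Fin 2),
      (∀ i, p i ≠ 0 ∧ ‖p i‖ ≤ 1 ∧ betaMeasure β (diskCap (p i)) =
        ENNReal.ofReal (capM β * capG (β + 1/2) α)) ∧
      Pairwise fun i j => Disjoint (diskCap (p i)) (diskCap (p j))}, (k : ℝ) * α ≤ Real.pi := by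
    rintro k ⟨p, hp, hd⟩
    have hnorm : ∀ i, ‖p i‖ = Real.cos α := by
      intro i
      obtain ⟨hp0, hp1, hp2⟩ := hp i
      have hc : Real.cos (Real.arccos ‖p i‖) = ‖p i‖ :=
        Real.cos_arccos (by linarith [norm_nonneg (p i)]) hp1
      have hmem : Real.arccos ‖p i‖ ∈ Set.Icc 0 (Real.pi / 2) :=
        ⟨Real.arccos_nonneg _, Real.arccos_le_pi_div_two.2 (norm_nonneg _)⟩
      have hα : α ∈ Set.Icc 0 (Real.pi / 2) := ⟨h0.le, h1.le⟩
      rw [cap_measure β hβ (p i) hp0 _ hc, ← capM, ENNReal.ofReal_eq_ofReal_iff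
        (mul_nonneg hM.le (hnn _ hmem)) (mul_nonneg hM.le (hnn _ hα))] at hp2
      have := hmono.injOn hmem hα (mul_left_cancel₀ hM.ne' hp2)
      rw [← hc, this]
    choose θ hθ using fun i => exists_dirv (p i)
    apply caps_upper α h0 h1 k θ
    intro i j hij
    have : Disjoint (diskCap (p i)) (diskCap (p j)) := hd hij
    rw [hθ i, hθ j, hnorm i, hnorm j] at this
    exact this
  have hbdd : BddAbove {k : ℕ | ∃ p : Fin k → EuclideanSpace ℝ (Fin 2),
      (∀ i, p i ≠ 0 ∧ ‖p i‖ ≤ 1 ∧ betaMeasure β (diskCap (p i)) =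
        ENNReal.ofReal (capM β * capG (β + 1/2) α)) ∧
      Pairwise fun i j => Disjoint (diskCap (p i)) (diskCap (p j))} := by
    refine ⟨⌊Real.pi / α⌋₊, fun k hk => ?_⟩
    apply Nat.le_floor
    rw [le_div_iff₀ h0]
    exact hup k hk
  have hlow : ∀ k : ℕ, k * α < Real.pi → k ∈ {k : ℕ | ∃ p : Fin k → EuclideanSpace ℝ (Fin 2),
      (∀ i, p i ≠ 0 ∧ ‖p i‖ ≤ 1 ∧ betaMeasure β (diskCap (p i)) =
        ENNReal.ofReal (capM β * capG (β + 1/2) α)) ∧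
      Pairwise fun i j => Disjoint (diskCap (p i)) (diskCap (p j))} := by
    intro k hk
    refine ⟨fun i => Real.cos α • dirv (2 * Real.pi * i / k), fun i => ?_,
      caps_lower α h0 h1 k hk⟩
    have hn : ‖Real.cos α • dirv (2 * Real.pi * i / k)‖ = Real.cos α := by
      rw [norm_smul, norm_dirv, mul_one, Real.norm_of_nonneg hcos.le]
    have hne : Real.cos α • dirv (2 * Real.pi * i / k) ≠ 0 := by
      rw [← norm_pos_iff, hn]; exact hcos
    exact ⟨hne, hn.trans_le (Real.cos_le_one α), cap_measure β hβ _ hne α hn.symm⟩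
  constructor
  · have hc : 0 < Real.pi / α := by positivity
    have hcp : 0 < ⌈Real.pi / α⌉₊ := Nat.ceil_pos.2 hc
    have hlt : ((⌈Real.pi / α⌉₊ - 1 : ℕ) : ℝ) * α < Real.pi := by
      rw [← lt_div_iff₀ h0]
      exact Nat.lt_ceil.1 (by omega)
    have hle : ⌈Real.pi / α⌉₊ - 1 ≤ mEps β (capM β * capG (β + 1/2) α) :=
      le_csSup hbdd (hlow _ hlt)
    have h2 : Real.pi / α ≤ (mEps β (capM β * capG (β + 1/2) α) : ℝ) + 1 := by
      refine (Nat.le_ceil _).trans ?_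
      have : ⌈Real.pi / α⌉₊ ≤ mEps β (capM β * capG (β + 1/2) α) + 1 := by omega
      exact_mod_cast this
    rw [div_le_iff₀ h0] at h2
    linarith
  · exact hup _ (Nat.sSup_mem ⟨0, hlow 0 (by simpa using hpi)⟩ hbdd)

/-- for `d ≥ 4` and `β = d/2 - 2`, there is a constant `c > 0` with
`m(ε)·ε^{1/(d-1)} → c` as `ε → 0⁺`. -/
theorem max_disjoint_caps_asymptotics (d : ℕ) (hd : 4 ≤ d)
    (β : ℝ) (hβ : β = (d : ℝ) / 2 - 2) :
    ∃ c : ℝ, 0 < c ∧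
      Filter.Tendsto (fun ε : ℝ => (mEps β ε : ℝ) * ε ^ (1 / ((d : ℝ) - 1)))
        (nhdsWithin 0 (Set.Ioi 0)) (nhds c) := by
  have hpi := Real.pi_pos
  obtain ⟨n, rfl⟩ : ∃ n, d = n + 2 := ⟨d - 2, by omega⟩
  have hd' : (4 : ℝ) ≤ ((n + 2 : ℕ) : ℝ) := by exact_mod_cast hd
  have hβ0 : 0 ≤ β := by rw [hβ]; linarith
  have hq : 0 ≤ β + 1/2 := by linarith
  have hM := capM_pos β hβ0
  have hmono := capG_strictMono (β + 1/2) hq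
  have hcont : Continuous (capG (β + 1/2)) :=
    continuous_iff_continuousAt.2 fun x => (capG_hasDeriv _ hq x).continuousAt
  have hG : 0 < capG (β + 1/2) (Real.pi / 2) := by
    rw [← capG_zero (β + 1/2)]
    exact hmono ⟨le_rfl, by positivity⟩ ⟨by positivity, le_rfl⟩ (by positivity)
  have hex : ∀ ε : ℝ, ∃ α : ℝ, ε ∈ Set.Ioo 0 (capM β * capG (β + 1/2) (Real.pi / 2)) →
      0 < α ∧ α < Real.pi / 2 ∧ ε = capM β * capG (β + 1/2) α := by
    intro ε
    by_cases h : ε ∈ Set.Ioo 0 (capM β * capG (β + 1/2) (Real.pi / 2))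
    · have := intermediate_value_Ioo (f := fun α => capM β * capG (β + 1/2) α)
        (a := 0) (b := Real.pi / 2) (by positivity)
        (continuous_const.mul hcont).continuousOn
      simp only [capG_zero, mul_zero] at this
      obtain ⟨α, hα, he⟩ := this h
      exact ⟨α, fun _ => ⟨hα.1, hα.2, he.symm⟩⟩
    · exact ⟨0, fun h' => absurd h' h⟩
  choose A hA using hex
  have hev : ∀ᶠ ε : ℝ in nhdsWithin 0 (Set.Ioi 0),
      ε ∈ Set.Ioo 0 (capM β * capG (β + 1/2) (Real.pi / 2)) :=
    Ioo_mem_nhdsGT (by positivity)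
  have hA0 : Filter.Tendsto A (nhdsWithin 0 (Set.Ioi 0)) (nhdsWithin 0 (Set.Ioi 0)) := by
    rw [tendsto_nhdsWithin_iff]
    constructor
    · rw [Metric.tendsto_nhds]
      intro δ hδ
      have hδ' : 0 < min δ (Real.pi / 2) := by positivity
      have hm : min δ (Real.pi / 2) ∈ Set.Icc 0 (Real.pi / 2) := ⟨hδ'.le, min_le_right _ _⟩
      have hpos : 0 < capG (β + 1/2) (min δ (Real.pi / 2)) := by
        rw [← capG_zero (β + 1/2)]
        exact hmono ⟨le_rfl, by positivity⟩ hm hδ'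
      have h2 : ∀ᶠ ε : ℝ in nhdsWithin 0 (Set.Ioi 0),
          ε ∈ Set.Ioo 0 (capM β * capG (β + 1/2) (min δ (Real.pi / 2))) :=
        Ioo_mem_nhdsGT (by positivity)
      filter_upwards [hev, h2] with ε h3 h4
      obtain ⟨ha, hb, hc⟩ := hA ε h3
      rw [Real.dist_eq, sub_zero, abs_of_pos ha]
      have h5 := h4.2
      nth_rewrite 1 [hc] at h5
      have h6 := lt_of_mul_lt_mul_left h5 hM.le
      have := (hmono.lt_iff_lt ⟨ha.le, hb.le⟩ hm).1 h6
      exact this.trans_le (min_le_left _ _)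
    · filter_upwards [hev] with ε h3
      exact (hA ε h3).1
  have hn : 2 * (β + 1/2) + 1 = n := by rw [hβ]; push_cast; ring
  have hlim := ((capG_lim n (β + 1/2) hq hn).comp hA0).const_mul (capM β)
  have hmA : Filter.Tendsto (fun ε => (mEps β ε : ℝ) * A ε) (nhdsWithin 0 (Set.Ioi 0))
      (nhds Real.pi) := by
    have hA1 : Filter.Tendsto (fun ε => Real.pi - A ε) (nhdsWithin 0 (Set.Ioi 0))
        (nhds Real.pi) := by
      have := (hA0.mono_right nhdsWithin_le_nhds).const_sub Real.pi
      rwa [sub_zero] at this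
    refine tendsto_of_tendsto_of_tendsto_of_le_of_le' hA1 tendsto_const_nhds ?_ ?_
    · filter_upwards [hev] with ε h3
      obtain ⟨ha, hb, hc⟩ := hA ε h3
      have := (mEps_bounds β hβ0 (A ε) ha hb).1
      rwa [← hc] at this
    · filter_upwards [hev] with ε h3
      obtain ⟨ha, hb, hc⟩ := hA ε h3
      have := (mEps_bounds β hβ0 (A ε) ha hb).2
      rwa [← hc] at this
  have hL : 0 < capM β * (1 / ((n : ℝ) + 1)) := by positivity
  have hpow := hlim.rpow_const (p := 1 / (((n + 2 : ℕ) : ℝ) - 1)) (Or.inl hL.ne')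
  refine ⟨_, ?_, (hmA.mul hpow).congr' ?_⟩
  · positivity
  · filter_upwards [hev] with ε h3
    obtain ⟨ha, hb, hc⟩ := hA ε h3
    have e1 : capM β * ((fun α => capG (β + 1/2) α / α ^ (n + 1)) ∘ A) ε = ε / A ε ^ (n + 1) := by
      simp only [Function.comp]
      rw [← mul_div_assoc, ← hc]
    have e2 : (((n + 2 : ℕ) : ℝ) - 1) = ((n + 1 : ℕ) : ℝ) := by push_cast; ring
    rw [e1, e2, Real.div_rpow h3.1.le (by positivity), one_div,
      Real.pow_rpow_inv_natCast ha.le (by omega)]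
    field_simp
end

section
/- Fix an integer d ≥ 4 and set β = d/2 − 2. There exist constants c > 0 and ε₀ > 0 such that for every ε ∈ (0, ε₀), every R ∈ (0,1) with g_β(R) = ε, and every point x ∈ ℝ² with ‖x‖ ≤ 1, one has μ_β({y ∈ 𝔻 : the closed segment [x,y] is disjoint from the closed ball of radius R centered at the origin}) ≤ c·ε. -/
open MeasureTheory

lemma vrm_mp : MeasurePreserving (fun y : EuclideanSpace ℝ (Fin 2) => (y 0, y 1)) volume
    (volume : Measure (ℝ × ℝ)) :=
  (volume_preserving_finTwoArrow ℝ).comp (EuclideanSpace.volume_preserving_symm_measurableEquiv_toLp (Fin 2))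

lemma vrm_mp' : MeasurePreserving (fun y : EuclideanSpace ℝ (Fin 2) => (y 1, y 0)) volume
    (volume : Measure (ℝ × ℝ)) :=
  (Measure.measurePreserving_swap (μ := (volume : Measure ℝ)) (ν := (volume : Measure ℝ))).comp vrm_mp

lemma vrm_normsq (y : EuclideanSpace ℝ (Fin 2)) : ‖y‖ ^ 2 = y 0 ^ 2 + y 1 ^ 2 := by
  rw [EuclideanSpace.norm_sq_eq]; simp

lemma vrm_piece (S : Set ℝ) (a : ℝ) (h : ∀ t ∈ S, ∀ u ∈ S, |t - u| ≤ a) :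
    volume S ≤ ENNReal.ofReal a := by
  refine (Real.volume_le_diam S).trans (Metric.ediam_le ?_)
  intro t ht u hu
  rw [edist_dist, Real.dist_eq]
  exact ENNReal.ofReal_le_ofReal (h t ht u hu)

/-- The slab. -/
def vrmT (r b ρ : ℝ) : Set (ℝ × ℝ) :=
  {p | r ≤ p.1 ^ 2 + p.2 ^ 2 ∧ p.1 ^ 2 + p.2 ^ 2 ≤ 1 ∧ 1 / 2 ≤ |p.1| ∧ |p.2 - b| ≤ ρ}

lemma vrmT_meas (r b ρ : ℝ) : MeasurableSet (vrmT r b ρ) := by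
  apply IsClosed.measurableSet
  have h1 : IsClosed {p : ℝ × ℝ | r ≤ p.1 ^ 2 + p.2 ^ 2} :=
    isClosed_le (by fun_prop) (by fun_prop)
  have h2 : IsClosed {p : ℝ × ℝ | p.1 ^ 2 + p.2 ^ 2 ≤ 1} :=
    isClosed_le (by fun_prop) (by fun_prop)
  have h3 : IsClosed {p : ℝ × ℝ | 1 / 2 ≤ |p.1|} :=
    isClosed_le (by fun_prop) (by fun_prop)
  have h4 : IsClosed {p : ℝ × ℝ | |p.2 - b| ≤ ρ} :=
    isClosed_le (by fun_prop) (by fun_prop)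
  exact h1.inter (h2.inter (h3.inter h4))

lemma vrmT_vol (r b ρ : ℝ) (hr : r ≤ 1) (hρ : 0 ≤ ρ) :
    volume (vrmT r b ρ) ≤ ENNReal.ofReal (4 * ρ * (1 - r)) := by
  rw [Measure.volume_eq_prod, Measure.prod_apply_symm (vrmT_meas r b ρ)]
  have key : ∀ s : ℝ, volume ((fun t : ℝ => (t, s)) ⁻¹' vrmT r b ρ) ≤
      (Set.Icc (b - ρ) (b + ρ)).indicator (fun _ => ENNReal.ofReal (2 * (1 - r))) s := by
    intro s
    by_cases hs : s ∈ Set.Icc (b - ρ) (b + ρ)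
    · rw [Set.indicator_of_mem hs]
      have hsub : ((fun t : ℝ => (t, s)) ⁻¹' vrmT r b ρ) ⊆
          {t | r ≤ t ^ 2 + s ^ 2 ∧ t ^ 2 + s ^ 2 ≤ 1 ∧ 1 / 2 ≤ t} ∪
          {t | r ≤ t ^ 2 + s ^ 2 ∧ t ^ 2 + s ^ 2 ≤ 1 ∧ 1 / 2 ≤ -t} := by
        rintro t ⟨h1, h2, h3, h4⟩
        rcases le_abs.1 h3 with h | h
        · exact Or.inl ⟨h1, h2, h⟩
        · exact Or.inr ⟨h1, h2, h⟩
      refine (measure_mono hsub).trans ((measure_union_le _ _).trans ?_)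
      rw [two_mul, ENNReal.ofReal_add (by linarith) (by linarith)]
      refine add_le_add (vrm_piece _ _ ?_) (vrm_piece _ _ ?_)
      · rintro t ⟨h1, h2, h3⟩ u ⟨g1, g2, g3⟩
        rw [abs_le]; constructor <;> by_contra! hc <;> nlinarith
      · rintro t ⟨h1, h2, h3⟩ u ⟨g1, g2, g3⟩
        rw [abs_le]; constructor <;> by_contra! hc <;> nlinarith
    · have : ((fun t : ℝ => (t, s)) ⁻¹' vrmT r b ρ) = ∅ := by
        ext t
        simp only [Set.mem_preimage, Set.mem_empty_iff_false, iff_false]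
        rintro ⟨h1, h2, h3, h4⟩
        rw [abs_le] at h4
        exact hs ⟨by linarith [h4.1], by linarith [h4.2]⟩
      rw [this]; simp
  refine (lintegral_mono key).trans ?_
  rw [lintegral_indicator measurableSet_Icc, setLIntegral_const, Real.volume_Icc,
    ← ENNReal.ofReal_mul (by linarith)]
  apply le_of_eq; congr 1; ring

lemma vrm_upper (β : ℝ) (hβ : 0 ≤ β) (R : ℝ) (hR : 0 < R) (hR1 : R < 1) (hR2 : 1 / 2 ≤ R ^ 2)
    (x : EuclideanSpace ℝ (Fin 2)) (hx : ‖x‖ ≤ 1) :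
    betaMeasure β {y | ‖y‖ ≤ 1 ∧
          segment ℝ x y ∩ Metric.closedBall (0 : EuclideanSpace ℝ (Fin 2)) R = ∅} ≤
      ENNReal.ofReal ((β + 1) / Real.pi * (1 - R ^ 2) ^ β *
        (16 * Real.sqrt (1 - R ^ 2) * (1 - R ^ 2))) := by
  set a := 1 - R ^ 2 with ha
  have ha0 : 0 < a := by nlinarith
  set ρ := 2 * Real.sqrt a with hρ
  have hsq := Real.sq_sqrt ha0.le
  have hs0 := Real.sqrt_nonneg a
  set B : Set (EuclideanSpace ℝ (Fin 2)) :=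
    (fun y : EuclideanSpace ℝ (Fin 2) => (y 0, y 1)) ⁻¹' vrmT (R ^ 2) (x 1) ρ ∪
    (fun y : EuclideanSpace ℝ (Fin 2) => (y 1, y 0)) ⁻¹' vrmT (R ^ 2) (x 0) ρ with hB
  have hBm : MeasurableSet B :=
    (vrm_mp.measurable (vrmT_meas _ _ _)).union (vrm_mp'.measurable (vrmT_meas _ _ _))
  have hsub : {y | ‖y‖ ≤ 1 ∧
      segment ℝ x y ∩ Metric.closedBall (0 : EuclideanSpace ℝ (Fin 2)) R = ∅} ⊆ B := by
    rintro y ⟨hy, hyd⟩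
    have hout : ∀ z ∈ segment ℝ x y, R < ‖z‖ := by
      intro z hz
      by_contra! hc
      have : z ∈ segment ℝ x y ∩ Metric.closedBall (0 : EuclideanSpace ℝ (Fin 2)) R :=
        ⟨hz, by simpa using hc⟩
      rw [hyd] at this; exact this
    have h1 := hout y (right_mem_segment ℝ x y)
    have h2 := hout ((1 / 2 : ℝ) • x + (1 / 2 : ℝ) • y)
      ⟨1 / 2, 1 / 2, by norm_num, by norm_num, by norm_num, rfl⟩
    have e1 := vrm_normsq y
    have e2 := vrm_normsq ((1 / 2 : ℝ) • x + (1 / 2 : ℝ) • y)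
    have e3 := vrm_normsq x
    simp only [PiLp.add_apply, PiLp.smul_apply, smul_eq_mul] at e2
    have f1 : R ^ 2 ≤ ‖y‖ ^ 2 := pow_le_pow_left₀ hR.le h1.le 2
    have f1' : ‖y‖ ^ 2 ≤ 1 := pow_le_one₀ (norm_nonneg _) hy
    have f3 : ‖x‖ ^ 2 ≤ 1 := pow_le_one₀ (norm_nonneg _) hx
    have f2 := pow_le_pow_left₀ hR.le h2.le 2
    have hd : (y 0 - x 0) ^ 2 + (y 1 - x 1) ^ 2 ≤ ρ ^ 2 := by
      rw [hρ, mul_pow, hsq]; nlinarith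
    have hρ0 : 0 ≤ ρ := by positivity
    have g0 : |y 0 - x 0| ≤ ρ := abs_le_of_sq_le_sq (by nlinarith [sq_nonneg (y 1 - x 1)]) hρ0
    have g1 : |y 1 - x 1| ≤ ρ := abs_le_of_sq_le_sq (by nlinarith [sq_nonneg (y 0 - x 0)]) hρ0
    by_cases hc : 1 / 2 ≤ |y 0|
    · left; exact ⟨by simp only []; linarith, by simp only []; linarith, hc, g1⟩
    · right
      refine ⟨by simp only []; linarith, by simp only []; linarith, ?_, g0⟩
      simp only []
      by_contra! hc'
      push Not at hc
      have q0 : y 0 ^ 2 < (1 / 2) ^ 2 := sq_lt_sq' (by linarith [(abs_lt.1 hc).1]) (abs_lt.1 hc).2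
      have q1 : y 1 ^ 2 < (1 / 2) ^ 2 := sq_lt_sq' (by linarith [(abs_lt.1 hc').1]) (abs_lt.1 hc').2
      norm_num at q0 q1
      linarith
  have hBvol : volume B ≤ ENNReal.ofReal (16 * Real.sqrt a * a) := by
    refine (measure_union_le _ _).trans ?_
    rw [vrm_mp.measure_preimage (vrmT_meas _ _ _).nullMeasurableSet,
      vrm_mp'.measure_preimage (vrmT_meas _ _ _).nullMeasurableSet]
    refine (add_le_add (vrmT_vol _ _ _ (by linarith) (by positivity))
      (vrmT_vol _ _ _ (by linarith) (by positivity))).trans ?_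
    rw [← ha, ← ENNReal.ofReal_add (by positivity) (by positivity)]
    apply le_of_eq; congr 1; rw [hρ]; ring
  refine (measure_mono hsub).trans ?_
  rw [betaMeasure, withDensity_apply _ hBm]
  have hK : 0 ≤ (β + 1) / Real.pi := by positivity
  have hBn : ∀ y ∈ B, R ^ 2 ≤ ‖y‖ ^ 2 ∧ ‖y‖ ^ 2 ≤ 1 := by
    intro y hy
    rw [vrm_normsq]
    rcases hy with ⟨h1, h2, _⟩ | ⟨h1, h2, _⟩
    · exact ⟨h1, h2⟩
    · simp only [] at h1 h2
      exact ⟨by linarith, by linarith⟩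
  calc _ ≤ ∫⁻ y in B, ENNReal.ofReal ((β + 1) / Real.pi * a ^ β) := by
        refine setLIntegral_mono measurable_const ?_
        intro y hy
        apply ENNReal.ofReal_le_ofReal
        obtain ⟨h1, h2⟩ := hBn y hy
        split_ifs
        · exact mul_le_mul_of_nonneg_left
            (Real.rpow_le_rpow (by linarith) (by linarith) hβ) hK
        · positivity
    _ = ENNReal.ofReal ((β + 1) / Real.pi * a ^ β) * volume B := by rw [setLIntegral_const]
    _ ≤ _ := by
        rw [ENNReal.ofReal_mul (p := (β + 1) / Real.pi * a ^ β) (by positivity)]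
        gcongr

lemma vrm_lower (β : ℝ) (hβ : 0 ≤ β) (R : ℝ) (hR : 0 < R) (hR1 : R < 1) :
    ENNReal.ofReal ((β + 1) / Real.pi * ((1 - R ^ 2) / 4) ^ β *
        ((1 - R ^ 2) / 8 * Real.sqrt (1 - R ^ 2))) ≤
    betaMeasure β {x | ‖x‖ ≤ 1 ∧ R ≤ x 0} := by
  set a := 1 - R ^ 2 with ha
  have ha0 : 0 < a := by nlinarith
  have hsq := Real.sq_sqrt ha0.le
  have hs0 := Real.sqrt_nonneg a
  have hK : 0 ≤ (β + 1) / Real.pi := by positivity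
  set Q : Set (ℝ × ℝ) := Set.Icc R (R + a / 8) ×ˢ Set.Icc (-(Real.sqrt a / 2)) (Real.sqrt a / 2)
  have hQm : MeasurableSet Q := measurableSet_Icc.prod measurableSet_Icc
  set B : Set (EuclideanSpace ℝ (Fin 2)) :=
    (fun y : EuclideanSpace ℝ (Fin 2) => (y 0, y 1)) ⁻¹' Q with hB
  have hBm : MeasurableSet B := vrm_mp.measurable hQm
  have hBvol : volume B = ENNReal.ofReal (a / 8 * Real.sqrt a) := by
    rw [hB, vrm_mp.measure_preimage hQm.nullMeasurableSet, Measure.volume_eq_prod,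
      Measure.prod_prod, Real.volume_Icc, Real.volume_Icc, ← ENNReal.ofReal_mul (by linarith)]
    congr 1; ring
  have hBn : ∀ y ∈ B, ‖y‖ ^ 2 ≤ 1 - a / 4 := by
    rintro y ⟨⟨h1, h2⟩, ⟨h3, h4⟩⟩
    simp only [] at h1 h2 h3 h4
    rw [vrm_normsq]
    have k1 : y 1 ^ 2 ≤ a / 4 := by nlinarith
    have k0 : y 0 ^ 2 ≤ (R + a / 8) ^ 2 := pow_le_pow_left₀ (by linarith) h2 2
    have : a ≤ 1 := by nlinarith
    nlinarith
  have hB1 : ∀ y ∈ B, ‖y‖ ≤ 1 := by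
    intro y hy
    have := hBn y hy
    by_contra! hc
    nlinarith
  have hsub : B ⊆ {x | ‖x‖ ≤ 1 ∧ R ≤ x 0} := fun y hy => ⟨hB1 y hy, hy.1.1⟩
  refine le_trans ?_ (measure_mono hsub)
  rw [betaMeasure, withDensity_apply _ hBm]
  calc _ = ENNReal.ofReal ((β + 1) / Real.pi * (a / 4) ^ β) * volume B := by
        rw [hBvol, ← ENNReal.ofReal_mul (by positivity)]
    _ = ∫⁻ y in B, ENNReal.ofReal ((β + 1) / Real.pi * (a / 4) ^ β) := by
        rw [setLIntegral_const]
    _ ≤ _ := by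
        refine setLIntegral_mono' hBm ?_
        intro y hy
        apply ENNReal.ofReal_le_ofReal
        rw [if_pos (hB1 y hy)]
        have := hBn y hy
        exact mul_le_mul_of_nonneg_left
            (Real.rpow_le_rpow (by positivity) (by linarith) hβ) hK

/-- for `d ≥ 4` and `β = d/2 - 2`, there are `c > 0` and `ε₀ > 0` such
that for all `ε ∈ (0, ε₀)`, all `R ∈ (0,1)` with `g_β(R) = ε` and every `x` with
`‖x‖ ≤ 1`, the `μ_β`-measure of the `ε`-visible region from `x` (the points `y` of the
disk such that the segment `[x,y]` misses the ball of radius `R`) is at most `c·ε`. -/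
theorem visible_region_measure_bound (d : ℕ) (hd : 4 ≤ d)
    (β : ℝ) (hβ : β = (d : ℝ) / 2 - 2) :
    ∃ c : ℝ, 0 < c ∧ ∃ ε₀ : ℝ, 0 < ε₀ ∧ ∀ ε : ℝ, 0 < ε → ε < ε₀ →
      ∀ R : ℝ, 0 < R → R < 1 →
      betaMeasure β {x | ‖x‖ ≤ 1 ∧ R ≤ x 0} = ENNReal.ofReal ε →
      ∀ x : EuclideanSpace ℝ (Fin 2), ‖x‖ ≤ 1 →
      betaMeasure β {y | ‖y‖ ≤ 1 ∧
          segment ℝ x y ∩ Metric.closedBall (0 : EuclideanSpace ℝ (Fin 2)) R = ∅} ≤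
        ENNReal.ofReal (c * ε) := by
  have hβ0 : 0 ≤ β := by
    have : (4 : ℝ) ≤ d := by exact_mod_cast hd
    linarith
  have hK : 0 < (β + 1) / Real.pi := by positivity
  refine ⟨128 * 4 ^ β, by positivity, (β + 1) / Real.pi * (1 / 8) ^ β / 32, by positivity, ?_⟩
  intro ε hε hε0 R hR hR1 hcap x hx
  have ha0 : 0 < 1 - R ^ 2 := by nlinarith
  have hlow := vrm_lower β hβ0 R hR hR1
  rw [hcap, ENNReal.ofReal_le_ofReal_iff hε.le] at hlow
  have hs0 := Real.sqrt_nonneg (1 - R ^ 2)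
  have hR2 : 1 / 2 ≤ R ^ 2 := by
    by_contra! hc
    have h1 : ((1 : ℝ) / 8) ^ β ≤ ((1 - R ^ 2) / 4) ^ β :=
      Real.rpow_le_rpow (by norm_num) (by linarith) hβ0
    have h2 : 1 / 2 ≤ Real.sqrt (1 - R ^ 2) := Real.le_sqrt_of_sq_le (by linarith)
    have h3 : (1 : ℝ) / 32 ≤ (1 - R ^ 2) / 8 * Real.sqrt (1 - R ^ 2) := by nlinarith
    have h4 : (β + 1) / Real.pi * (1 / 8) ^ β * (1 / 32) ≤ (β + 1) / Real.pi *
        ((1 - R ^ 2) / 4) ^ β * ((1 - R ^ 2) / 8 * Real.sqrt (1 - R ^ 2)) := by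
      gcongr
    linarith
  refine (vrm_upper β hβ0 R hR hR1 hR2 x hx).trans (ENNReal.ofReal_le_ofReal ?_)
  have h4 : (0 : ℝ) < 4 ^ β := by positivity
  have e : (128 * 4 ^ β) * ((β + 1) / Real.pi * ((1 - R ^ 2) / 4) ^ β *
      ((1 - R ^ 2) / 8 * Real.sqrt (1 - R ^ 2))) = (β + 1) / Real.pi * (1 - R ^ 2) ^ β *
        (16 * Real.sqrt (1 - R ^ 2) * (1 - R ^ 2)) := by
    rw [Real.div_rpow ha0.le (by norm_num)]
    field_simp
    ring
  rw [← e]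
  exact mul_le_mul_of_nonneg_left hlow (by positivity)
end
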